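/- Let s ∈ ℂ with 0 < Re(s) < 1. Then the principal value integral p.v. ∫_0^∞ t^{s-1}/(1-t) dt converges and equals π·cot(π s). -/

import Mathlib

open MeasureTheory Filter

/-!
The substitution `t ↦ t⁻¹` folds `∫ t in (1 + ε)..∞, f t / (1 - t)` onto the interval
`(0, (1 + ε)⁻¹)`, replacing `f t` by `-t⁻¹ * f t⁻¹`. The two singularities at `1` then cancel, and
the mismatch between `1 - ε` and `(1 + ε)⁻¹` is an interval of length `O(ε²)` on which the integrand
is `O(ε⁻¹)`; hence the principal value is the ordinary integral
`∫ t in 0..1, (f t - t⁻¹ * f t⁻¹) / (1 - t)`. For `f t = t ^ (s - 1)`, expanding `1 / (1 - t)` as a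
geometric series gives `∑ n, (1 / (n + s) - 1 / (n + (1 - s)))`, which is Euler's partial fraction
expansion of `π * cot (π * s)`.
-/

section

open Set Asymptotics
open scoped Topology

lemma one_sub_ofReal_ne_zero {t : ℝ} (ht : t ≠ 1) : 1 - (t : ℂ) ≠ 0 := by
  rw [sub_ne_zero]
  exact_mod_cast ht.symm

lemma norm_one_sub_ofReal_of_le {t : ℝ} (ht : t ≤ 1) : ‖1 - (t : ℂ)‖ = 1 - t := by
  rw [← Complex.ofReal_one, ← Complex.ofReal_sub, Complex.norm_of_nonneg (sub_nonneg.mpr ht)]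

lemma intervalIntegrable_div_one_sub {f : ℝ → ℂ} {a b : ℝ} (hf : IntervalIntegrable f volume a b)
    (ha : a < 1) (hb : b < 1) :
    IntervalIntegrable (fun t ↦ f t / (1 - (t : ℂ))) volume a b := by
  simp_rw [div_eq_mul_inv]
  refine hf.mul_continuousOn (ContinuousOn.inv₀ (by fun_prop) fun t ht ↦ ?_)
  exact one_sub_ofReal_ne_zero (ht.2.trans_lt (max_lt ha hb)).ne

lemma intervalIntegrable_div_one_sub_of_isBigO {f : ℝ → ℂ} {a : ℝ} (ha : a < 1)
    (hf : IntervalIntegrable f volume a 1) (hO : f =O[𝓝[<] 1] fun t ↦ 1 - t) :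
    IntervalIntegrable (fun t ↦ f t / (1 - (t : ℂ))) volume a 1 := by
  obtain ⟨M, hM⟩ := hO.bound
  obtain ⟨c, ⟨hac, hc⟩, hcM⟩ := (mem_nhdsLT_iff_exists_mem_Ico_Ioo_subset ha).mp hM
  have hleft : IntervalIntegrable f volume a c := hf.mono_set (by grind [uIcc])
  have hright : IntegrableOn f (Ioo c 1) :=
    (intervalIntegrable_iff_integrableOn_Ioo_of_le hc.le).mp (hf.mono_set (by grind [uIcc]))
  refine (intervalIntegrable_div_one_sub hleft ha hc).trans
    ((intervalIntegrable_iff_integrableOn_Ioo_of_le hc.le).mpr ?_)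
  refine IntegrableOn.of_bound measure_Ioo_lt_top
    (hright.aestronglyMeasurable.div₀ (by fun_prop)) M ?_
  filter_upwards [ae_restrict_mem measurableSet_Ioo] with t ht
  have hpos : 0 < 1 - t := sub_pos.mpr ht.2
  rw [norm_div, norm_one_sub_ofReal_of_le ht.2.le, div_le_iff₀ hpos]
  simpa only [mem_ofPred_eq, Real.norm_of_nonneg hpos.le] using hcM ht

lemma intervalIntegrable_div_one_sub_of_differentiableAt {f : ℝ → ℂ} {a : ℝ} (ha : a < 1)
    (hf : IntervalIntegrable f volume a 1) (hd : DifferentiableAt ℝ f 1) (h1 : f 1 = 0) :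
    IntervalIntegrable (fun t ↦ f t / (1 - (t : ℂ))) volume a 1 := by
  refine intervalIntegrable_div_one_sub_of_isBigO ha hf (IsBigO.of_neg_right ?_)
  simpa [h1] using hd.isBigO_sub.mono nhdsWithin_le_nhds

lemma tendsto_intervalIntegral_nhdsLT {E : Type*} [NormedAddCommGroup E] [NormedSpace ℝ E]
    {f : ℝ → E} {a b : ℝ} (hab : a < b) (hf : IntervalIntegrable f volume a b) :
    Tendsto (fun x ↦ ∫ t in a..x, f t) (𝓝[<] b) (𝓝 (∫ t in a..b, f t)) := by
  have hcont := intervalIntegral.continuousOn_primitive_interval' hf left_mem_uIcc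
  refine (hcont b right_mem_uIcc).tendsto.mono_left ?_
  rw [uIcc_of_le hab.le, nhdsWithin_Icc_eq_nhdsLE hab]
  exact nhdsWithin_mono _ Iio_subset_Iic_self

lemma tendsto_integral_pow_smul_nhds_zero {E : Type*} [NormedAddCommGroup E] [NormedSpace ℝ E]
    {f : ℝ → E} (hf : IntervalIntegrable f volume 0 1) :
    Tendsto (fun N : ℕ ↦ ∫ t in (0 : ℝ)..1, t ^ N • f t) atTop (𝓝 0) := by
  rw [← intervalIntegral.integral_zero (E := E) (μ := volume) (a := (0 : ℝ)) (b := 1)]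
  refine intervalIntegral.tendsto_integral_filter_of_dominated_convergence (fun t ↦ ‖f t‖)
    (.of_forall fun N ↦ ?_) (.of_forall fun N ↦ .of_forall fun t ht ↦ ?_) hf.norm ?_
  · exact (intervalIntegrable_iff.mp (hf.continuousOn_smul (by fun_prop))).aestronglyMeasurable
  · rw [uIoc_of_le zero_le_one] at ht
    rw [norm_smul, Real.norm_of_nonneg (pow_nonneg ht.1.le N)]
    exact mul_le_of_le_one_left (norm_nonneg _) (pow_le_one₀ ht.1.le ht.2)
  · filter_upwards [(volume : Measure ℝ).ae_ne 1] with t ht1 ht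
    rw [uIoc_of_le zero_le_one] at ht
    have hpow := tendsto_pow_atTop_nhds_zero_of_lt_one ht.1.le (ht.2.lt_of_ne ht1)
    simpa using hpow.smul_const (f t)

/-- The transform of `f` under the inversion `t ↦ t⁻¹`, weighted by `t⁻¹` so that it moves `f` past
the kernel `1 / (1 - t)`: up to sign, the integral of `f t / (1 - t)` over `(c⁻¹, ∞)` is that of
`invReflect f t / (1 - t)` over `(0, c)`. -/
noncomputable def invReflect (f : ℝ → ℂ) (t : ℝ) : ℂ :=
  (t : ℂ)⁻¹ * f t⁻¹

lemma invReflect_one (f : ℝ → ℂ) : invReflect f 1 = f 1 := by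
  simp [invReflect]

lemma differentiableAt_invReflect_one {f : ℝ → ℂ} (hf : DifferentiableAt ℝ f 1) :
    DifferentiableAt ℝ (invReflect f) 1 := by
  have hinv : DifferentiableAt ℝ (fun t : ℝ ↦ t⁻¹) 1 := differentiableAt_inv one_ne_zero
  have hcoe : DifferentiableAt ℝ (fun t : ℝ ↦ (t : ℂ)) 1 :=
    Complex.ofRealCLM.differentiableAt
  have hcomp : DifferentiableAt ℝ (fun t : ℝ ↦ f t⁻¹) 1 :=
    DifferentiableAt.comp (g := f) 1 (by simpa using hf) hinv
  exact (hcoe.inv (by simp)).mul hcomp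

lemma invReflect_ofReal_cpow {t : ℝ} (ht : 0 < t) (s : ℂ) :
    invReflect (fun x ↦ (x : ℂ) ^ (s - 1)) t = (t : ℂ) ^ (1 - s - 1) := by
  have harg : (t : ℂ).arg ≠ Real.pi := by
    rw [Complex.arg_ofReal_of_nonneg ht.le]
    exact Real.pi_pos.ne
  have ht0 : (t : ℂ) ≠ 0 := by exact_mod_cast ht.ne'
  rw [invReflect, Complex.ofReal_inv, Complex.inv_cpow _ _ harg, ← Complex.cpow_neg,
    Complex.cpow_sub _ _ ht0, Complex.cpow_one, neg_sub, div_eq_inv_mul]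

lemma integral_Ioi_inv_div_one_sub (f : ℝ → ℂ) {c : ℝ} (hc0 : 0 < c) (hc1 : c ≤ 1) :
    ∫ t in Ioi c⁻¹, f t / (1 - (t : ℂ)) =
      -∫ t in (0 : ℝ)..c, invReflect f t / (1 - (t : ℂ)) := by
  rw [← inv_Ioo_0_left hc0, ← image_inv_eq_inv,
    integral_image_eq_integral_abs_deriv_smul measurableSet_Ioo
      (fun t ht ↦ (hasDerivAt_inv ht.1.ne').hasDerivWithinAt) inv_injective.injOn,
    intervalIntegral.integral_of_le hc0.le, integral_Ioc_eq_integral_Ioo, ← integral_neg]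
  refine setIntegral_congr_fun measurableSet_Ioo fun t ht ↦ ?_
  have ht0 : (t : ℂ) ≠ 0 := by exact_mod_cast ht.1.ne'
  have ht1 := one_sub_ofReal_ne_zero (ht.2.trans_le hc1).ne
  have hflip : 1 - (t : ℂ)⁻¹ = -(1 - (t : ℂ)) / t := by
    field_simp
    ring
  simp only [abs_neg, abs_inv, abs_pow, sq_abs, Complex.real_smul, invReflect]
  push_cast
  rw [hflip]
  field_simp

lemma tendsto_integral_div_one_sub_of_isBigO_one {g : ℝ → ℂ}
    (hg : g =O[𝓝[<] 1] fun _ ↦ (1 : ℝ)) :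
    Tendsto (fun ε : ℝ ↦ ∫ t in (1 - ε)..(1 + ε)⁻¹, g t / (1 - (t : ℂ))) (𝓝[>] 0) (𝓝 0) := by
  obtain ⟨M, hM⟩ := hg.bound
  obtain ⟨c, hc, hcM⟩ := mem_nhdsLT_iff_exists_Ioo_subset.mp hM
  have hlim : Tendsto (fun ε : ℝ ↦ M * ε) (𝓝[>] 0) (𝓝 0) := by
    simpa using (tendsto_id (x := 𝓝 (0 : ℝ))).const_mul M |>.mono_left nhdsWithin_le_nhds
  refine squeeze_zero_norm' ?_ hlim
  filter_upwards [Ioo_mem_nhdsGT (sub_pos.mpr hc)] with ε ⟨hε0, hεc⟩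
  have hgap : 1 - (1 + ε)⁻¹ = ε * (1 + ε)⁻¹ := by
    field_simp
    ring
  have hlen : (1 + ε)⁻¹ - (1 - ε) = ε * (ε * (1 + ε)⁻¹) := by
    field_simp
    ring
  have hgap_pos : 0 < ε * (1 + ε)⁻¹ := by positivity
  have hle : 1 - ε ≤ (1 + ε)⁻¹ := by
    rw [← sub_nonneg, hlen]
    positivity
  have hbound : ∀ t ∈ uIoc (1 - ε) (1 + ε)⁻¹,
      ‖g t / (1 - (t : ℂ))‖ ≤ M / (ε * (1 + ε)⁻¹) := by
    intro t ht
    rw [uIoc_of_le hle] at ht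
    have hdist : ε * (1 + ε)⁻¹ ≤ 1 - t := by linarith [ht.2]
    have hgt : ‖g t‖ ≤ M := by
      simpa using hcM (show t ∈ Ioo c 1 from ⟨by linarith [ht.1], by linarith⟩)
    rw [norm_div, norm_one_sub_ofReal_of_le (by linarith)]
    have hM0 : 0 ≤ M := (norm_nonneg _).trans hgt
    gcongr
  calc ‖∫ t in (1 - ε)..(1 + ε)⁻¹, g t / (1 - (t : ℂ))‖
      ≤ M / (ε * (1 + ε)⁻¹) * |(1 + ε)⁻¹ - (1 - ε)| :=
        intervalIntegral.norm_integral_le_of_norm_le_const hbound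
    _ = M * ε := by
        rw [hlen, abs_of_pos (by positivity)]
        field_simp

lemma integral_Ioo_add_integral_Ioi_div_one_sub {f : ℝ → ℂ} (hf : IntervalIntegrable f volume 0 1)
    (hg : IntervalIntegrable (invReflect f) volume 0 1) {ε : ℝ} (hε0 : 0 < ε) (hε1 : ε < 1) :
    (∫ t in Ioo 0 (1 - ε), f t / (1 - (t : ℂ))) + ∫ t in Ioi (1 + ε), f t / (1 - (t : ℂ)) =
      (∫ t in (0 : ℝ)..(1 - ε), (f t - invReflect f t) / (1 - (t : ℂ))) -
        ∫ t in (1 - ε)..(1 + ε)⁻¹, invReflect f t / (1 - (t : ℂ)) := by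
  have hc0 : 0 < (1 + ε)⁻¹ := by positivity
  have hc1 : (1 + ε)⁻¹ < 1 := inv_lt_one_of_one_lt₀ (by linarith)
  have integrable_to {h : ℝ → ℂ} (hh : IntervalIntegrable h volume 0 1) {c : ℝ} (hc0 : 0 < c)
      (hc1 : c < 1) : IntervalIntegrable (fun t ↦ h t / (1 - (t : ℂ))) volume 0 c :=
    intervalIntegrable_div_one_sub (hh.mono_set (by grind [uIcc])) one_pos hc1
  have hfε := integrable_to hf (sub_pos.mpr hε1) (sub_lt_self 1 hε0)
  have hgε := integrable_to hg (sub_pos.mpr hε1) (sub_lt_self 1 hε0)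
  have htail := integral_Ioi_inv_div_one_sub f hc0 hc1.le
  rw [inv_inv] at htail
  simp only [sub_div]
  rw [htail, ← integral_Ioc_eq_integral_Ioo, ← intervalIntegral.integral_of_le (by linarith),
    intervalIntegral.integral_sub hfε hgε,
    ← intervalIntegral.integral_interval_sub_left (integrable_to hg hc0 hc1) hgε]
  ring

theorem tendsto_pv_integral_div_one_sub {f : ℝ → ℂ} (hf : IntervalIntegrable f volume 0 1)
    (hg : IntervalIntegrable (invReflect f) volume 0 1) (hf1 : DifferentiableAt ℝ f 1) :
    Tendsto (fun ε : ℝ ↦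
        (∫ t in Ioo 0 (1 - ε), f t / (1 - (t : ℂ))) + ∫ t in Ioi (1 + ε), f t / (1 - (t : ℂ)))
      (𝓝[>] 0) (𝓝 (∫ t in (0 : ℝ)..1, (f t - invReflect f t) / (1 - (t : ℂ)))) := by
  have hg1 := differentiableAt_invReflect_one hf1
  have hquot := intervalIntegrable_div_one_sub_of_differentiableAt one_pos (hf.sub hg)
    (hf1.sub hg1) (by simp [invReflect_one])
  have hto : Tendsto (fun ε : ℝ ↦ 1 - ε) (𝓝[>] 0) (𝓝[<] 1) := by
    refine tendsto_nhdsWithin_iff.mpr ⟨?_, ?_⟩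
    · simpa using (tendsto_id (x := 𝓝 (0 : ℝ))).const_sub 1 |>.mono_left nhdsWithin_le_nhds
    · filter_upwards [self_mem_nhdsWithin] with ε hε using sub_lt_self (1 : ℝ) hε
  have hmain := (tendsto_intervalIntegral_nhdsLT one_pos hquot).comp hto
  have hmismatch := tendsto_integral_div_one_sub_of_isBigO_one
    (hg1.continuousAt.tendsto.isBigO_one ℝ |>.mono nhdsWithin_le_nhds)
  rw [← sub_zero (∫ t in (0 : ℝ)..1, _)]
  refine (hmain.sub hmismatch).congr' ?_
  filter_upwards [Ioo_mem_nhdsGT one_pos] with ε ⟨hε0, hε1⟩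
  exact (integral_Ioo_add_integral_Ioi_div_one_sub hf hg hε0 hε1).symm

lemma differentiableAt_ofReal_cpow_const {x : ℝ} (hx : x ≠ 0) (r : ℂ) :
    DifferentiableAt ℝ (fun t : ℝ ↦ (t : ℂ) ^ r) x := by
  rcases eq_or_ne r 0 with rfl | hr
  · simp
  · exact (hasDerivAt_ofReal_cpow_const hx hr).differentiableAt

lemma intervalIntegrable_cpow_sub_one {a : ℂ} (ha : 0 < a.re) (x y : ℝ) :
    IntervalIntegrable (fun t : ℝ ↦ (t : ℂ) ^ (a - 1)) volume x y :=
  intervalIntegral.intervalIntegrable_cpow' (by simpa using ha)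

lemma integral_cpow_sub_one {a : ℂ} (ha : 0 < a.re) :
    ∫ t in (0 : ℝ)..1, (t : ℂ) ^ (a - 1) = 1 / a := by
  have ha0 : a ≠ 0 := by
    rintro rfl
    simp at ha
  rw [integral_cpow (Or.inl (by simpa using ha))]
  simp [ha0]

lemma sum_range_cpow_sub_cpow {t : ℝ} (ht0 : 0 < t) (ht1 : t ≠ 1) (a b : ℂ) (N : ℕ) :
    ∑ n ∈ Finset.range N, ((t : ℂ) ^ (n + a - 1) - (t : ℂ) ^ (n + b - 1)) =
      ((t : ℂ) ^ (a - 1) - (t : ℂ) ^ (b - 1)) / (1 - (t : ℂ)) -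
        t ^ N • (((t : ℂ) ^ (a - 1) - (t : ℂ) ^ (b - 1)) / (1 - (t : ℂ))) := by
  have ht : (t : ℂ) ≠ 0 := by exact_mod_cast ht0.ne'
  have h1t := one_sub_ofReal_ne_zero ht1
  have hgeom := mul_neg_geom_sum (t : ℂ) N
  simp only [add_sub_assoc, Complex.cpow_add _ _ ht, Complex.cpow_natCast, ← mul_sub,
    ← Finset.sum_mul, Complex.real_smul, Complex.ofReal_pow]
  rw [← one_sub_mul, ← hgeom]
  field_simp

lemma intervalIntegrable_cpow_sub_cpow_div_one_sub {a b : ℂ} (ha : 0 < a.re) (hb : 0 < b.re) :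
    IntervalIntegrable
      (fun t : ℝ ↦ ((t : ℂ) ^ (a - 1) - (t : ℂ) ^ (b - 1)) / (1 - (t : ℂ))) volume 0 1 :=
  intervalIntegrable_div_one_sub_of_differentiableAt one_pos
    ((intervalIntegrable_cpow_sub_one ha 0 1).sub (intervalIntegrable_cpow_sub_one hb 0 1))
    ((differentiableAt_ofReal_cpow_const one_ne_zero _).sub
      (differentiableAt_ofReal_cpow_const one_ne_zero _)) (by simp)

theorem tendsto_sum_one_div_sub_one_div {a b : ℂ} (ha : 0 < a.re) (hb : 0 < b.re) :
    Tendsto (fun N : ℕ ↦ ∑ n ∈ Finset.range N, (1 / ((n : ℂ) + a) - 1 / (n + b))) atTop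
      (𝓝 (∫ t in (0 : ℝ)..1, ((t : ℂ) ^ (a - 1) - (t : ℂ) ^ (b - 1)) / (1 - (t : ℂ)))) := by
  set K : ℝ → ℂ := fun t ↦ ((t : ℂ) ^ (a - 1) - (t : ℂ) ^ (b - 1)) / (1 - (t : ℂ))
  have hK : IntervalIntegrable K volume 0 1 := intervalIntegrable_cpow_sub_cpow_div_one_sub ha hb
  have re_pos {c : ℂ} (hc : 0 < c.re) (n : ℕ) : 0 < ((n : ℂ) + c).re := by
    simp only [Complex.add_re, Complex.natCast_re]
    positivity
  have hterm (n : ℕ) : 1 / ((n : ℂ) + a) - 1 / (n + b) =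
      ∫ t in (0 : ℝ)..1, ((t : ℂ) ^ (n + a - 1) - (t : ℂ) ^ (n + b - 1)) := by
    rw [intervalIntegral.integral_sub (intervalIntegrable_cpow_sub_one (re_pos ha n) 0 1)
      (intervalIntegrable_cpow_sub_one (re_pos hb n) 0 1),
      integral_cpow_sub_one (re_pos ha n), integral_cpow_sub_one (re_pos hb n)]
  have hpartial (N : ℕ) : ∑ n ∈ Finset.range N, (1 / ((n : ℂ) + a) - 1 / (n + b)) =
      (∫ t in (0 : ℝ)..1, K t) - ∫ t in (0 : ℝ)..1, t ^ N • K t := by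
    simp_rw [hterm]
    rw [← intervalIntegral.integral_sub hK (hK.continuousOn_smul (by fun_prop)),
      ← intervalIntegral.integral_finsetSum fun n _ ↦
        (intervalIntegrable_cpow_sub_one (re_pos ha n) 0 1).sub
          (intervalIntegrable_cpow_sub_one (re_pos hb n) 0 1)]
    exact intervalIntegral.integral_congr_Ioo_of_le zero_le_one fun t ht ↦
      sum_range_cpow_sub_cpow ht.1 ht.2.ne a b N
  simp_rw [hpartial]
  simpa using (tendsto_integral_pow_smul_nhds_zero hK).const_sub (∫ t in (0 : ℝ)..1, K t)

lemma mem_integerComplement_of_re_mem_Ioo {s : ℂ} (hs : s.re ∈ Ioo 0 1) :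
    s ∈ Complex.integerComplement := by
  rintro ⟨n, rfl⟩
  rw [Complex.intCast_re] at hs
  have h0 : 0 < n := by exact_mod_cast hs.1
  have h1 : n < 1 := by exact_mod_cast hs.2
  omega

theorem tendsto_sum_one_div_sub_one_div_pi_mul_cot {s : ℂ} (hs : s ∈ Complex.integerComplement) :
    Tendsto (fun N : ℕ ↦ ∑ n ∈ Finset.range N, (1 / ((n : ℂ) + s) - 1 / (n + (1 - s)))) atTop
      (𝓝 (Real.pi * Complex.cot (Real.pi * s))) := by
  have hsum (N : ℕ) : ∑ n ∈ Finset.range N, (1 / ((n : ℂ) + s) - 1 / (n + (1 - s))) =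
      ∑ n ∈ Finset.range N, cotTerm s n + 1 / s - 1 / ((N : ℂ) + s) := by
    induction N with
    | zero => simp
    | succ N ih =>
      have hneg : s - ((N : ℂ) + 1) = -(N + (1 - s)) := by ring
      rw [Finset.sum_range_succ, Finset.sum_range_succ, ih, cotTerm, hneg, div_neg]
      push_cast
      ring
  have hlast : Tendsto (fun N : ℕ ↦ 1 / ((N : ℂ) + s)) atTop (𝓝 0) := by
    simp_rw [one_div]
    exact tendsto_inv₀_cobounded.comp
      ((tendsto_add_const_cobounded s).comp tendsto_natCast_atTop_cobounded)
  simp_rw [hsum]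
  simpa using ((tendsto_logDeriv_euler_cot_sub hs).add_const (1 / s)).sub hlast

end

theorem pv_mellin_of_hilbert_kernel (s : ℂ) (hs0 : 0 < s.re) (hs1 : s.re < 1) :
    Tendsto (fun ε : ℝ =>
        (∫ t in Set.Ioo (0:ℝ) (1 - ε), (t:ℂ) ^ (s - 1) / (1 - (t:ℂ)))
          + ∫ t in Set.Ioi (1 + ε), (t:ℂ) ^ (s - 1) / (1 - (t:ℂ)))
      (nhdsWithin 0 (Set.Ioi 0))
      (nhds ((Real.pi : ℂ) * Complex.cot ((Real.pi : ℂ) * s))) := by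
  set f : ℝ → ℂ := fun t ↦ (t : ℂ) ^ (s - 1)
  have hs1' : 0 < (1 - s).re := by simpa using hs1
  have hrefl : Set.EqOn (invReflect f) (fun t ↦ (t : ℂ) ^ (1 - s - 1)) (Set.Ioo 0 1) :=
    fun t ht ↦ invReflect_ofReal_cpow ht.1 s
  have hrefl_int : IntervalIntegrable (invReflect f) volume 0 1 :=
    (intervalIntegrable_cpow_sub_one hs1' 0 1).congr_uIoo <| by
      simpa [Set.uIoo_of_le] using hrefl.symm
  have hpv := tendsto_pv_integral_div_one_sub (intervalIntegrable_cpow_sub_one hs0 0 1)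
    hrefl_int (differentiableAt_ofReal_cpow_const one_ne_zero (s - 1))
  have hfold : ∫ t in (0 : ℝ)..1, (f t - invReflect f t) / (1 - (t : ℂ)) =
      ∫ t in (0 : ℝ)..1, ((t : ℂ) ^ (s - 1) - (t : ℂ) ^ (1 - s - 1)) / (1 - (t : ℂ)) :=
    intervalIntegral.integral_congr_Ioo_of_le zero_le_one fun t ht ↦ by
      simp only [hrefl ht, f]
  have hcot := tendsto_nhds_unique (tendsto_sum_one_div_sub_one_div hs0 hs1')
    (tendsto_sum_one_div_sub_one_div_pi_mul_cot (mem_integerComplement_of_re_mem_Ioo ⟨hs0, hs1⟩))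
  rwa [hfold, hcot] at hpv
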